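/- arXiv:2103.15993 — 8 statements merged into one kernel-verified Lean document; each statement's English description precedes it below -/
import Mathlib

section
/- Let φ : ℝⁿ → ℝ be continuous and ψ : ℝⁿ → ℝ ∪ {+∞} be proper, lower semicontinuous, with ψ(0) finite. Define p(Δ) := inf_{‖s‖ ≤ Δ} (φ(s) + ψ(s)) for Δ ≥ 0 (so p(0) = φ(0) + ψ(0)). Then p(Δ) is finite for every Δ ≥ 0 and the function Δ ↦ p(Δ) is lower semicontinuous on [0, ∞). -/
open Set

/-!
For `f` lower semicontinuous and `K` compact, `y < ⊤` is strictly below `inf_K f` exactly when it is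
strictly below `f` at every point of `K`, because the infimum is attained. With `y = ⊥` this says
that the infimum is not `⊥`. For variable `y` it says that `y < inf_K f` means `K` lies in the open
set `{y < f}`, a condition stable under perturbing `K` upper hemicontinuously (Berge). Closed balls
of a proper space are upper hemicontinuous in their radius, since they are the decreasing
intersections of the larger compact balls.
-/

section CompactInfimum

variable {X Y α : Type*} [TopologicalSpace X] [TopologicalSpace Y] [CompleteLinearOrder α]

theorem lt_biInf_iff_of_isCompact {f : X → α} {K : Set X} {y : α} (hK : IsCompact K)
    (hf : LowerSemicontinuousOn f K) (hy : y < ⊤) :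
    y < ⨅ x ∈ K, f x ↔ ∀ x ∈ K, y < f x := by
  refine ⟨fun h x hx ↦ h.trans_le (iInf₂_le x hx), fun h ↦ ?_⟩
  rcases K.eq_empty_or_nonempty with rfl | hne
  · simpa using hy
  · obtain ⟨a, ha, hmin⟩ := hf.exists_isMinOn hne hK
    exact (h a ha).trans_le (le_iInf₂ fun _ hx ↦ hmin hx)

theorem lowerSemicontinuous_biInf_of_upperHemicontinuous {f : X → α} {K : Y → Set X}
    (hf : LowerSemicontinuous f) (hK : UpperHemicontinuous K) (hKc : ∀ t, IsCompact (K t)) :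
    LowerSemicontinuous fun t ↦ ⨅ x ∈ K t, f x := by
  intro t y hy
  have lt_iff (u : Y) : y < ⨅ x ∈ K u, f x ↔ K u ⊆ {x | y < f x} :=
    lt_biInf_iff_of_isCompact (hKc u) (hf.lowerSemicontinuousOn _) (hy.trans_le le_top)
  simp only [lt_iff] at hy ⊢
  exact upperHemicontinuous_iff_forall_isOpen.1 hK t _ (hf.isOpen_preimage y) hy

theorem exists_biInf_eq_coe_of_isCompact {f : X → EReal} {K : Set X} {a : X} (hK : IsCompact K)
    (hf : LowerSemicontinuousOn f K) (hbot : ∀ x ∈ K, f x ≠ ⊥) (ha : a ∈ K) (hatop : f a ≠ ⊤) :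
    ∃ r : ℝ, ⨅ x ∈ K, f x = r := by
  have inf_ne_top : ⨅ x ∈ K, f x ≠ ⊤ := ne_top_of_le_ne_top hatop (iInf₂_le a ha)
  have bot_lt_inf : ⊥ < ⨅ x ∈ K, f x :=
    (lt_biInf_iff_of_isCompact hK hf bot_lt_top).2 fun x hx ↦ (hbot x hx).bot_lt
  exact ⟨_, (EReal.coe_toReal inf_ne_top bot_lt_inf.ne').symm⟩

theorem lowerSemicontinuous_coe_add {φ : X → ℝ} {ψ : X → EReal} (hφ : LowerSemicontinuous φ)
    (hψ : LowerSemicontinuous ψ) : LowerSemicontinuous fun x ↦ (φ x : EReal) + ψ x :=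
  (continuous_coe_real_ereal.comp_lowerSemicontinuous hφ EReal.coe_strictMono.monotone).add' hψ
    fun _ ↦ EReal.continuousAt_add (.inl (EReal.coe_ne_top _)) (.inl (EReal.coe_ne_bot _))

end CompactInfimum

theorem upperHemicontinuous_closedBall {X : Type*} [PseudoMetricSpace X] [ProperSpace X] (c : X) :
    UpperHemicontinuous (Metric.closedBall c) := by
  rw [upperHemicontinuous_iff_forall_isOpen]
  intro r U hU hrU
  have directed : Directed (· ⊇ ·) fun R : Ioi r ↦ Metric.closedBall c R :=
    Monotone.directed_ge fun _ _ h ↦ Metric.closedBall_subset_closedBall h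
  have iInter_eq : ⋂ R : Ioi r, Metric.closedBall c R = Metric.closedBall c r := by
    rw [← Metric.biInter_gt_closedBall c r]
    exact iInter_subtype _ _
  obtain ⟨⟨R, hrR⟩, hRU⟩ := exists_subset_nhds_of_isCompact' directed
    (fun R ↦ isCompact_closedBall c R) (fun _ ↦ Metric.isClosed_closedBall)
    fun x hx ↦ hU.mem_nhds (hrU (iInter_eq ▸ hx))
  filter_upwards [Iio_mem_nhds hrR] with t ht
  exact (Metric.closedBall_subset_closedBall (mem_Iio.1 ht).le).trans hRU

theorem stmt_1_general {X : Type*} [PseudoMetricSpace X] [ProperSpace X] (c : X)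
    (φ : X → ℝ) (hφ : LowerSemicontinuous φ)
    (ψ : X → EReal) (hψ_ne_bot : ∀ s, ψ s ≠ ⊥) (hψ_lsc : LowerSemicontinuous ψ) (hψc : ψ c ≠ ⊤)
    (p : ℝ → EReal) (hp : ∀ Δ : ℝ, p Δ = ⨅ s ∈ Metric.closedBall c Δ, ((φ s : EReal) + ψ s)) :
    (∀ Δ : ℝ, 0 ≤ Δ → ∃ r : ℝ, p Δ = (r : EReal)) ∧ LowerSemicontinuous p := by
  obtain rfl := funext hp
  have sum_lsc := lowerSemicontinuous_coe_add hφ hψ_lsc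
  have sum_ne_bot (s : X) : (φ s : EReal) + ψ s ≠ ⊥ :=
    EReal.add_ne_bot_iff.2 ⟨EReal.coe_ne_bot _, hψ_ne_bot s⟩
  have sum_ne_top : (φ c : EReal) + ψ c ≠ ⊤ := EReal.add_ne_top (EReal.coe_ne_top _) hψc
  constructor
  · intro Δ hΔ
    exact exists_biInf_eq_coe_of_isCompact (isCompact_closedBall c Δ)
      (sum_lsc.lowerSemicontinuousOn _) (fun s _ ↦ sum_ne_bot s)
      (Metric.mem_closedBall_self hΔ) sum_ne_top
  · exact lowerSemicontinuous_biInf_of_upperHemicontinuous sum_lsc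
      (upperHemicontinuous_closedBall c) (isCompact_closedBall c)

/-- With `φ` continuous, `ψ` proper lsc and finite at `0`, the value function
`p(Δ) = inf_{‖s‖ ≤ Δ} (φ s + ψ s)` is finite for every `Δ ≥ 0` and is lower semicontinuous
on `[0, ∞)`. -/
theorem stmt_1 (n : ℕ)
    (φ : EuclideanSpace ℝ (Fin n) → ℝ) (hφ : Continuous φ)
    (ψ : EuclideanSpace ℝ (Fin n) → EReal)
    (hψ_ne_bot : ∀ s, ψ s ≠ ⊥)
    (hψ_lsc : LowerSemicontinuous ψ)
    (hψ0 : ψ 0 ≠ ⊤)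
    (p : ℝ → EReal)
    (hp : ∀ Δ : ℝ,
      p Δ = ⨅ s ∈ {s : EuclideanSpace ℝ (Fin n) | ‖s‖ ≤ Δ}, ((φ s : EReal) + ψ s)) :
    (∀ Δ : ℝ, 0 ≤ Δ → ∃ r : ℝ, p Δ = (r : EReal)) ∧
    LowerSemicontinuousOn p (Ici (0 : ℝ)) := by
  have h := stmt_1_general 0 φ hφ.lowerSemicontinuous ψ hψ_ne_bot hψ_lsc hψ0 p (by simpa using hp)
  exact ⟨h.1, h.2.lowerSemicontinuousOn _⟩
end

section
/- Let φ : ℝⁿ → ℝ be continuous and ψ : ℝⁿ → ℝ ∪ {+∞} be proper, lower semicontinuous, with ψ(0) finite. Let p(Δ) := inf_{‖s‖ ≤ Δ} (φ(s) + ψ(s)) and P(Δ) := argmin_{‖s‖ ≤ Δ} (φ(s) + ψ(s)). Suppose Δ_k → Δ̄ ≥ 0 with Δ_k ≥ 0, p(Δ_k) → p(Δ̄), and s_k ∈ P(Δ_k) for each k. Then the sequence (s_k) is bounded and every cluster point of (s_k) belongs to P(Δ̄). -/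
open Set Filter

/-!
If `f` is lower semicontinuous, `f (s i) ≤ b i` and `b i → b₀`, then `f a ≤ b₀` at every cluster
point `a` of `s`. This is used twice: with the norm and the radii it shows that a cluster point of
the minimizers is feasible for the limiting trust region, and with the objective and its optimal
values it shows that the cluster point attains the limiting optimal value.
-/

/-- The set `argmin_{x ∈ S} f x` of all global minimizers of `f` over `S`; it is empty when the
infimum is not attained. -/
def minimizersOn {α β : Type*} [Preorder β] (f : α → β) (S : Set α) : Set α :=
  {x | x ∈ S ∧ IsMinOn f S x}

theorem mem_minimizersOn_iff_le_biInf {α β : Type*} [CompleteLattice β] {f : α → β}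
    {S : Set α} {x : α} : x ∈ minimizersOn f S ↔ x ∈ S ∧ f x ≤ ⨅ y ∈ S, f y :=
  and_congr_right' (isMinOn_iff.trans le_iInf₂_iff.symm)

section ConstrainedMinimization

variable {ι X β γ : Type*} [TopologicalSpace X] [TopologicalSpace γ] [LinearOrder γ]
  [OrderTopology γ] {l : Filter ι} {s : ι → X} {a : X}

theorem le_of_lowerSemicontinuousAt_of_mapClusterPt {g : X → γ} {r : ι → γ} {r₀ : γ}
    (hg : LowerSemicontinuousAt g a) (ha : MapClusterPt a l s) (hr : Tendsto r l (nhds r₀))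
    (hle : ∀ᶠ i in l, g (s i) ≤ r i) : g a ≤ r₀ := by
  by_contra! hlt
  obtain ⟨u, hu, v, hv, huv⟩ := hlt.exists_disjoint_Iio_Ioi
  have g_large : ∃ᶠ i in l, v < g (s i) := ha.frequently (hg v hv)
  have r_small : ∀ᶠ i in l, r i < u := hr.eventually_lt_const hu
  obtain ⟨i, hvi, hui, hi⟩ := (g_large.and_eventually (r_small.and hle)).exists
  exact (huv _ hui _ hvi).not_ge hi

theorem mem_minimizersOn_sublevel_of_mapClusterPt [CompleteLinearOrder β] [TopologicalSpace β]
    [OrderTopology β] {f : X → β} {g : X → γ} {r : ι → γ} {r₀ : γ}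
    (hf : LowerSemicontinuousAt f a) (hg : LowerSemicontinuousAt g a)
    (hr : Tendsto r l (nhds r₀))
    (hval : Tendsto (fun i => ⨅ x ∈ {x | g x ≤ r i}, f x) l (nhds (⨅ x ∈ {x | g x ≤ r₀}, f x)))
    (hs : ∀ᶠ i in l, s i ∈ minimizersOn f {x | g x ≤ r i}) (ha : MapClusterPt a l s) :
    a ∈ minimizersOn f {x | g x ≤ r₀} := by
  simp only [mem_minimizersOn_iff_le_biInf] at hs ⊢
  exact ⟨le_of_lowerSemicontinuousAt_of_mapClusterPt hg ha hr (hs.mono fun _ h => h.1),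
    le_of_lowerSemicontinuousAt_of_mapClusterPt hf ha hval (hs.mono fun _ h => h.2)⟩

end ConstrainedMinimization

theorem lowerSemicontinuous_coe_add_ereal {X : Type*} [TopologicalSpace X] {φ : X → ℝ}
    {ψ : X → EReal} (hφ : LowerSemicontinuous φ) (hψ : LowerSemicontinuous ψ) :
    LowerSemicontinuous fun x => (φ x : EReal) + ψ x := by
  have coe_φ : LowerSemicontinuous fun x => (φ x : EReal) :=
    continuous_coe_real_ereal.comp_lowerSemicontinuous hφ EReal.coe_strictMono.monotone
  exact coe_φ.add' hψ fun x =>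
    EReal.continuousAt_add (.inl (EReal.coe_ne_top _)) (.inl (EReal.coe_ne_bot _))

theorem isBounded_range_of_norm_le_of_tendsto {E : Type*} [SeminormedAddCommGroup E] {s : ℕ → E}
    {Δ : ℕ → ℝ} {Δbar : ℝ} (hs : ∀ k, ‖s k‖ ≤ Δ k) (hΔ : Tendsto Δ atTop (nhds Δbar)) :
    Bornology.IsBounded (range s) := by
  obtain ⟨M, hM⟩ := hΔ.bddAbove_range
  exact isBounded_iff_forall_norm_le.2
    ⟨M, forall_mem_range.2 fun k => (hs k).trans (hM (mem_range_self k))⟩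

theorem stmt_2_general {E β : Type*} [SeminormedAddCommGroup E] [CompleteLinearOrder β]
    [TopologicalSpace β] [OrderTopology β] {f : E → β} (hf : LowerSemicontinuous f)
    {Δ : ℕ → ℝ} {Δbar : ℝ} (hΔ : Tendsto Δ atTop (nhds Δbar))
    (hval : Tendsto (fun k => ⨅ x ∈ {x | ‖x‖ ≤ Δ k}, f x) atTop
      (nhds (⨅ x ∈ {x | ‖x‖ ≤ Δbar}, f x)))
    {s : ℕ → E} (hs : ∀ k, s k ∈ minimizersOn f {x | ‖x‖ ≤ Δ k}) :
    Bornology.IsBounded (range s) ∧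
      ∀ a, MapClusterPt a atTop s → a ∈ minimizersOn f {x | ‖x‖ ≤ Δbar} :=
  ⟨isBounded_range_of_norm_le_of_tendsto (fun k => (hs k).1) hΔ, fun a ha =>
    mem_minimizersOn_sublevel_of_mapClusterPt (hf a) (continuous_norm.lowerSemicontinuous a) hΔ
      hval (.of_forall hs) ha⟩

/-- Outer semicontinuity of the trust-region solution map: if `Δ_k → Δ̄ ≥ 0`,
`p(Δ_k) → p(Δ̄)` and `s_k ∈ P(Δ_k)`, then `(s_k)` is bounded and all its cluster points
belong to `P(Δ̄)`. -/
theorem stmt_2 (n : ℕ)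
    (φ : EuclideanSpace ℝ (Fin n) → ℝ) (hφ : Continuous φ)
    (ψ : EuclideanSpace ℝ (Fin n) → EReal)
    (hψ_ne_bot : ∀ s, ψ s ≠ ⊥)
    (hψ_lsc : LowerSemicontinuous ψ)
    (hψ0 : ψ 0 ≠ ⊤)
    (p : ℝ → EReal)
    (hp : ∀ Δ : ℝ,
      p Δ = ⨅ s ∈ {s : EuclideanSpace ℝ (Fin n) | ‖s‖ ≤ Δ}, ((φ s : EReal) + ψ s))
    (P : ℝ → Set (EuclideanSpace ℝ (Fin n)))
    (hP : ∀ Δ : ℝ, P Δ = {s : EuclideanSpace ℝ (Fin n) | ‖s‖ ≤ Δ ∧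
      ∀ t, ‖t‖ ≤ Δ → (φ s : EReal) + ψ s ≤ (φ t : EReal) + ψ t})
    (Δbar : ℝ) (hΔbar : 0 ≤ Δbar)
    (Δ : ℕ → ℝ) (hΔnn : ∀ k, 0 ≤ Δ k)
    (hΔto : Tendsto Δ atTop (nhds Δbar))
    (hpto : Tendsto (fun k => p (Δ k)) atTop (nhds (p Δbar)))
    (s : ℕ → EuclideanSpace ℝ (Fin n)) (hs : ∀ k, s k ∈ P (Δ k)) :
    Bornology.IsBounded (Set.range s) ∧
    ∀ a : EuclideanSpace ℝ (Fin n), MapClusterPt a atTop s → a ∈ P Δbar := by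
  obtain rfl := funext hp
  obtain rfl := funext hP
  -- `IsMinOn f S x` unfolds to the pointwise inequalities defining `P`.
  exact stmt_2_general (lowerSemicontinuous_coe_add_ereal hφ.lowerSemicontinuous hψ_lsc)
    hΔto hpto hs
end

section
/- Let f : ℝⁿ → ℝ be continuously differentiable, x ∈ ℝⁿ, and write g := ∇f(x). Let φ : ℝⁿ → ℝ be continuously differentiable with φ(0) = f(x), ∇φ(0) = g, and ∇φ Lipschitz continuous with constant L > 0. Let ψ : ℝⁿ → ℝ ∪ {+∞} be proper lower semicontinuous with ψ(0) = h(x) finite, and let ν > 0, Δ > 0. If s₁ is a global minimizer of (2ν)⁻¹‖s + νg‖² + ψ(s) over the ball {s : ‖s‖ ≤ Δ}, then φ(s₁) + ψ(s₁) ≤ f(x) + h(x) − ½(ν⁻¹ − L)‖s₁‖². -/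
/-!
The constant term `ν/2 * ‖g‖²` of `(2ν)⁻¹‖s + νg‖²` cancels when the objective at `s₁` is compared
with the objective at `0`, which leaves `⟪g, s₁⟫ + (2ν)⁻¹‖s₁‖² + ψ s₁ ≤ ψ 0`. The Lipschitz bound on
`∇φ` gives `φ s₁ ≤ φ 0 + ⟪g, s₁⟫ + (L/2)‖s₁‖²`, and adding the two estimates eliminates the inner
product.
-/

open Set AffineMap
open scoped Gradient RealInnerProductSpace

section LipschitzDerivative

theorem norm_image_sub_sub_le_of_norm_hasFDerivWithin_sub_le {E F : Type*}
    [NormedAddCommGroup E] [NormedSpace ℝ E] [NormedAddCommGroup F] [NormedSpace ℝ F]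
    {f : E → F} {f' : E → E →L[ℝ] F} {x y : E} {L : ℝ}
    (hf : ∀ z ∈ segment ℝ x y, HasFDerivWithinAt f (f' z) (segment ℝ x y) z)
    (hL : ∀ z ∈ segment ℝ x y, ‖f' z - f' x‖ ≤ L * ‖z - x‖) :
    ‖f y - f x - f' x (y - x)‖ ≤ L / 2 * ‖y - x‖ ^ 2 := by
  have line_mem : MapsTo (lineMap x y) (Icc (0 : ℝ) 1) (segment ℝ x y) := by
    rw [segment_eq_image_lineMap]
    exact mapsTo_image _ _
  have remainder_deriv : ∀ t ∈ Icc (0 : ℝ) 1, HasDerivWithinAt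
      (fun t : ℝ ↦ f (lineMap x y t) - f x - t • f' x (y - x))
      ((f' (lineMap x y t) - f' x) (y - x)) (Icc 0 1) t := fun t ht ↦ by
    have along_line := (hf _ (line_mem ht)).comp_hasDerivWithinAt t
      (hasDerivAt_lineMap.hasDerivWithinAt) line_mem
    exact ((along_line.sub_const (f x)).sub
      ((hasDerivWithinAt_id t _).smul_const (f' x (y - x)))).congr_deriv (by simp)
  have bound_deriv (t : ℝ) :
      HasDerivAt (fun t : ℝ ↦ L / 2 * ‖y - x‖ ^ 2 * t ^ 2) (L * ‖y - x‖ ^ 2 * t) t :=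
    ((hasDerivAt_pow 2 t).const_mul _).congr_deriv (by ring)
  have norm_deriv_le : ∀ t ∈ Ico (0 : ℝ) 1,
      ‖(f' (lineMap x y t) - f' x) (y - x)‖ ≤ L * ‖y - x‖ ^ 2 * t := fun t ht ↦ calc
    _ ≤ ‖f' (lineMap x y t) - f' x‖ * ‖y - x‖ := ContinuousLinearMap.le_opNorm _ _
    _ ≤ L * ‖lineMap x y t - x‖ * ‖y - x‖ := by
      gcongr
      exact hL _ (line_mem (Ico_subset_Icc_self ht))
    _ = L * ‖y - x‖ ^ 2 * t := by
      rw [lineMap_apply_module', add_sub_cancel_right, norm_smul, Real.norm_of_nonneg ht.1]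
      ring
  simpa using image_norm_le_of_norm_deriv_right_le_deriv_boundary
    (fun t ht ↦ (remainder_deriv t ht).continuousWithinAt)
    (fun t ht ↦ (remainder_deriv t (Ico_subset_Icc_self ht)).mono_of_mem_nhdsWithin
      (Icc_mem_nhdsGE_of_mem ht))
    (by simp) bound_deriv norm_deriv_le (right_mem_Icc.2 zero_le_one)

theorem le_add_inner_gradient_of_norm_gradient_sub_le {E : Type*}
    [NormedAddCommGroup E] [InnerProductSpace ℝ E] [CompleteSpace E]
    {f : E → ℝ} {x y : E} {L : ℝ}
    (hf : ∀ z ∈ segment ℝ x y, DifferentiableAt ℝ f z)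
    (hL : ∀ z ∈ segment ℝ x y, ‖∇ f z - ∇ f x‖ ≤ L * ‖z - x‖) :
    f y ≤ f x + ⟪∇ f x, y - x⟫ + L / 2 * ‖y - x‖ ^ 2 := by
  have remainder_le := norm_image_sub_sub_le_of_norm_hasFDerivWithin_sub_le
    (fun z hz ↦ (hf z hz).hasFDerivAt.hasFDerivWithinAt) fun z hz ↦ by
      simpa only [← toDual_gradient, ← map_sub, LinearIsometryEquiv.norm_map] using hL z hz
  rw [← toDual_gradient, InnerProductSpace.toDual_apply_apply] at remainder_le
  linarith [(le_abs_self _).trans remainder_le]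

end LipschitzDerivative

section ProximalGradient

variable {E : Type*} [NormedAddCommGroup E] [InnerProductSpace ℝ E]

/-- The objective of the proximal gradient step from `0` with gradient `g`, step size `ν` and
regularizer `ψ`, in completed-square form. Points where `ψ` is `⊤` are infeasible. -/
noncomputable def proxGradObjective (ν : ℝ) (g : E) (ψ : E → EReal) (s : E) : EReal :=
  (((2 * ν)⁻¹ * ‖s + ν • g‖ ^ 2 : ℝ) : EReal) + ψ s

theorem inv_two_mul_norm_add_smul_sq {ν : ℝ} (hν : ν ≠ 0) (g s : E) :
    (2 * ν)⁻¹ * ‖s + ν • g‖ ^ 2 =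
      ν / 2 * ‖g‖ ^ 2 + (⟪g, s⟫ + (2 * ν)⁻¹ * ‖s‖ ^ 2) := by
  rw [norm_add_sq_real, inner_smul_right, real_inner_comm, norm_smul, mul_pow, Real.norm_eq_abs,
    sq_abs]
  field

theorem proxGradObjective_le_iff {ν : ℝ} (hν : ν ≠ 0) (g : E) (ψ : E → EReal) (s t : E) :
    proxGradObjective ν g ψ s ≤ proxGradObjective ν g ψ t ↔
      ((⟪g, s⟫ + (2 * ν)⁻¹ * ‖s‖ ^ 2 : ℝ) : EReal) + ψ s ≤
        ((⟪g, t⟫ + (2 * ν)⁻¹ * ‖t‖ ^ 2 : ℝ) : EReal) + ψ t := by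
  simp only [proxGradObjective, inv_two_mul_norm_add_smul_sq hν, EReal.coe_add (ν / 2 * ‖g‖ ^ 2),
    add_assoc ((ν / 2 * ‖g‖ ^ 2 : ℝ) : EReal)]
  exact (EReal.addLECancellable_coe _).add_le_add_iff_left

theorem stmt_7_general [CompleteSpace E] {φ : E → ℝ} {ψ : E → EReal} {L ν : ℝ} {s₁ : E}
    (hφ : ∀ z ∈ segment ℝ 0 s₁, DifferentiableAt ℝ φ z)
    (hL : ∀ z ∈ segment ℝ 0 s₁, ‖∇ φ z - ∇ φ 0‖ ≤ L * ‖z‖) (hν : ν ≠ 0)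
    (hs₁ : proxGradObjective ν (∇ φ 0) ψ s₁ ≤ proxGradObjective ν (∇ φ 0) ψ 0) :
    (φ s₁ : EReal) + ψ s₁ ≤ ((φ 0 - 1 / 2 * (ν⁻¹ - L) * ‖s₁‖ ^ 2 : ℝ) : EReal) + ψ 0 := by
  have descent : φ s₁ ≤ φ 0 + ⟪∇ φ 0, s₁⟫ + L / 2 * ‖s₁‖ ^ 2 := by
    simpa using le_add_inner_gradient_of_norm_gradient_sub_le hφ (by simpa using hL)
  have model_le : ((⟪∇ φ 0, s₁⟫ + (2 * ν)⁻¹ * ‖s₁‖ ^ 2 : ℝ) : EReal) + ψ s₁ ≤ ψ 0 := by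
    simpa using (proxGradObjective_le_iff hν (∇ φ 0) ψ s₁ 0).1 hs₁
  calc (φ s₁ : EReal) + ψ s₁
    _ ≤ ((φ 0 + ⟪∇ φ 0, s₁⟫ + L / 2 * ‖s₁‖ ^ 2 : ℝ) : EReal) + ψ s₁ := by gcongr
    _ = ((φ 0 - 1 / 2 * (ν⁻¹ - L) * ‖s₁‖ ^ 2 : ℝ) : EReal) +
          (((⟪∇ φ 0, s₁⟫ + (2 * ν)⁻¹ * ‖s₁‖ ^ 2 : ℝ) : EReal) + ψ s₁) := by
      rw [← add_assoc, ← EReal.coe_add]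
      congr 2
      ring
    _ ≤ ((φ 0 - 1 / 2 * (ν⁻¹ - L) * ‖s₁‖ ^ 2 : ℝ) : EReal) + ψ 0 := by gcongr

end ProximalGradient

/-- Decrease obtained by one proximal-gradient step. If `s₁` globally minimizes
`(2ν)⁻¹‖s + νg‖² + ψ(s)` over the ball of radius `Δ`, where `g = ∇f(x)`, and `φ` is a `C¹`
model of `f` about `x` with `φ(0) = f(x)`, `∇φ(0) = g` and `∇φ` `L`-Lipschitz, then
`φ(s₁) + ψ(s₁) ≤ f(x) + h(x) − ½(ν⁻¹ − L)‖s₁‖²`. -/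
theorem stmt_7 (n : ℕ)
    (f : EuclideanSpace ℝ (Fin n) → ℝ) (hf : ContDiff ℝ 1 f)
    (x : EuclideanSpace ℝ (Fin n))
    (g : EuclideanSpace ℝ (Fin n)) (hg : g = gradient f x)
    (φ : EuclideanSpace ℝ (Fin n) → ℝ) (hφ : ContDiff ℝ 1 φ)
    (hφ0 : φ 0 = f x) (hφg : gradient φ 0 = g)
    (L : ℝ) (hL : 0 < L)
    (hφlip : ∀ a b : EuclideanSpace ℝ (Fin n),
      ‖gradient φ a - gradient φ b‖ ≤ L * ‖a - b‖)
    (h : EuclideanSpace ℝ (Fin n) → EReal) (hx : ℝ) (hhx : h x = (hx : EReal))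
    (ψ : EuclideanSpace ℝ (Fin n) → EReal)
    (hψ_ne_bot : ∀ s, ψ s ≠ ⊥)
    (hψ_lsc : LowerSemicontinuous ψ)
    (hψ0 : ψ 0 = (hx : EReal))
    (ν Δ : ℝ) (hν : 0 < ν) (hΔ : 0 < Δ)
    (s₁ : EuclideanSpace ℝ (Fin n)) (hs₁ball : ‖s₁‖ ≤ Δ)
    (hs₁min : ∀ t : EuclideanSpace ℝ (Fin n), ‖t‖ ≤ Δ →
      (((2 * ν)⁻¹ * ‖s₁ + ν • g‖ ^ 2 : ℝ) : EReal) + ψ s₁ ≤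
        (((2 * ν)⁻¹ * ‖t + ν • g‖ ^ 2 : ℝ) : EReal) + ψ t) :
    (φ s₁ : EReal) + ψ s₁ ≤
      ((f x + hx - (1 / 2) * (ν⁻¹ - L) * ‖s₁‖ ^ 2 : ℝ) : EReal) := by
  subst hφg
  have decrease := stmt_7_general (fun z _ ↦ hφ.differentiable one_ne_zero z)
    (fun z _ ↦ by simpa using hφlip z 0) hν.ne' (hs₁min 0 (by simpa using hΔ.le))
  rwa [hψ0, hφ0, ← EReal.coe_add, sub_add_eq_add_sub] at decrease
end

section
/- Let g : ℝᵐ → ℝ be Lipschitz continuous with constant L > 0 and let c : ℝⁿ → ℝᵐ be differentiable with derivative (Jacobian) x ↦ c′(x) Lipschitz continuous with constant M > 0. Define h(x) := g(c(x)) and the model ψ(s;x) := g(c(x) + c′(x)s). Then for every x, s ∈ ℝⁿ, |h(x + s) − ψ(s;x)| ≤ ½ L M ‖s‖². -/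
/-! Along the segment `t ↦ x + t • s`, the function `t ↦ c (x + t • s) - t • c' x s` has derivative
`(c' (x + t • s) - c' x) s`, of norm at most `(M * ‖s‖ ^ 2) * t`. The mean value inequality against
the primitive of this bound gives `‖c (x + s) - c x - c' x s‖ ≤ M / 2 * ‖s‖ ^ 2`, and `g` stretches
this distance by a factor of at most `L`. -/

open Set

section LipschitzDerivative

variable {E F : Type*} [NormedAddCommGroup E] [NormedSpace ℝ E]
  [NormedAddCommGroup F] [NormedSpace ℝ F]

theorem norm_image_sub_le_of_norm_deriv_right_le_mul_sub {f f' : ℝ → F} {a b C : ℝ}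
    (hf : ContinuousOn f (Icc a b))
    (hf' : ∀ t ∈ Ico a b, HasDerivWithinAt f (f' t) (Ici t) t)
    (bound : ∀ t ∈ Ico a b, ‖f' t‖ ≤ C * (t - a)) :
    ∀ ⦃t⦄, t ∈ Icc a b → ‖f t - f a‖ ≤ C / 2 * (t - a) ^ 2 := by
  have hasDerivAt_majorant (t : ℝ) :
      HasDerivAt (fun t ↦ C / 2 * (t - a) ^ 2) (C * (t - a)) t := by
    have hasDerivAt_sq := (((hasDerivAt_id' t).sub_const a).fun_pow 2).const_mul (C / 2)
    exact hasDerivAt_sq.congr_deriv (by ring)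
  exact image_norm_le_of_norm_deriv_right_le_deriv_boundary (hf.sub continuousOn_const)
    (fun t ht ↦ (hf' t ht).sub_const (f a)) (by simp) hasDerivAt_majorant bound

variable {f : E → F} {f' : E → E →L[ℝ] F} {S : Set E} {x v : E}

theorem hasDerivWithinAt_comp_add_smul_sub_smul {A : E →L[ℝ] F} {I : Set ℝ} {t : ℝ}
    (hf : HasFDerivWithinAt f A S (x + t • v)) (hI : MapsTo (fun r : ℝ ↦ x + r • v) I S) (w : F) :
    HasDerivWithinAt (fun r : ℝ ↦ f (x + r • v) - r • w) (A v - w) I t := by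
  have hasDerivAt_line : HasDerivAt (fun r : ℝ ↦ x + r • v) v t := by
    simpa using ((hasDerivAt_id t).smul_const v).const_add x
  have hasDerivAt_smul : HasDerivAt (fun r : ℝ ↦ r • w) w t := by
    simpa using (hasDerivAt_id t).smul_const w
  exact (hf.comp_hasDerivWithinAt t hasDerivAt_line.hasDerivWithinAt hI).sub
    hasDerivAt_smul.hasDerivWithinAt

theorem norm_image_add_sub_sub_le_of_norm_hasFDerivWithin_sub_le {C : ℝ} (hS : Convex ℝ S)
    (hf : ∀ z ∈ S, HasFDerivWithinAt f (f' z) S z) (hx : x ∈ S) (hxv : x + v ∈ S)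
    (bound : ∀ z ∈ S, ‖f' z - f' x‖ ≤ C * ‖z - x‖) :
    ‖f (x + v) - f x - f' x v‖ ≤ C / 2 * ‖v‖ ^ 2 := by
  have mapsTo_segment : MapsTo (fun t : ℝ ↦ x + t • v) (Icc 0 1) S :=
    fun t ht ↦ hS.add_smul_mem hx hxv ht
  have hasDerivWithinAt_remainder (t : ℝ) (ht : t ∈ Icc (0 : ℝ) 1) :
      HasDerivWithinAt (fun t : ℝ ↦ f (x + t • v) - t • f' x v)
        ((f' (x + t • v) - f' x) v) (Icc 0 1) t :=
    hasDerivWithinAt_comp_add_smul_sub_smul (hf _ (mapsTo_segment ht)) mapsTo_segment (f' x v)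
  have norm_deriv_le (t : ℝ) (ht : t ∈ Ico (0 : ℝ) 1) :
      ‖(f' (x + t • v) - f' x) v‖ ≤ C * ‖v‖ ^ 2 * (t - 0) := calc
    _ ≤ ‖f' (x + t • v) - f' x‖ * ‖v‖ := ContinuousLinearMap.le_opNorm _ v
    _ ≤ C * ‖x + t • v - x‖ * ‖v‖ := by
      gcongr
      exact bound _ (mapsTo_segment (Ico_subset_Icc_self ht))
    _ = C * ‖v‖ ^ 2 * (t - 0) := by
      rw [add_sub_cancel_left, norm_smul, Real.norm_of_nonneg ht.1]
      ring
  have remainder_le := norm_image_sub_le_of_norm_deriv_right_le_mul_sub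
    (fun t ht ↦ (hasDerivWithinAt_remainder t ht).continuousWithinAt)
    (fun t ht ↦ (hasDerivWithinAt_remainder t (Ico_subset_Icc_self ht)).mono_of_mem_nhdsWithin
      (Icc_mem_nhdsGE_of_mem ht))
    norm_deriv_le (right_mem_Icc.2 zero_le_one)
  calc
    ‖f (x + v) - f x - f' x v‖
        = ‖f (x + (1 : ℝ) • v) - (1 : ℝ) • f' x v - (f (x + (0 : ℝ) • v) - (0 : ℝ) • f' x v)‖ := by
      simp only [one_smul, zero_smul, add_zero, sub_zero, sub_right_comm]
    _ ≤ C * ‖v‖ ^ 2 / 2 * (1 - 0) ^ 2 := remainder_le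
    _ = C / 2 * ‖v‖ ^ 2 := by ring

theorem stmt_8_general {G : Type*} [SeminormedAddCommGroup G] {g : F → G} {L M : ℝ} (hL : 0 ≤ L)
    (hg : ∀ y z, ‖g y - g z‖ ≤ L * ‖y - z‖) (hS : Convex ℝ S)
    (hf : ∀ z ∈ S, HasFDerivWithinAt f (f' z) S z) (hx : x ∈ S) (hxv : x + v ∈ S)
    (hf' : ∀ z ∈ S, ‖f' z - f' x‖ ≤ M * ‖z - x‖) :
    ‖g (f (x + v)) - g (f x + f' x v)‖ ≤ 1 / 2 * L * M * ‖v‖ ^ 2 := calc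
  _ ≤ L * ‖f (x + v) - (f x + f' x v)‖ := hg _ _
  _ = L * ‖f (x + v) - f x - f' x v‖ := by rw [sub_sub]
  _ ≤ L * (M / 2 * ‖v‖ ^ 2) := by
    gcongr
    exact norm_image_add_sub_sub_le_of_norm_hasFDerivWithin_sub_le hS hf hx hxv hf'
  _ = 1 / 2 * L * M * ‖v‖ ^ 2 := by ring

end LipschitzDerivative

/-- If `g` is `L`-Lipschitz and `c` is differentiable with `M`-Lipschitz
Jacobian, then the model `ψ(s;x) = g(c(x) + c′(x)s)` of `h = g ∘ c` satisfies
`|h(x+s) − ψ(s;x)| ≤ ½ L M ‖s‖²`. -/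
theorem stmt_8 (n m : ℕ)
    (g : EuclideanSpace ℝ (Fin m) → ℝ) (L : ℝ) (hL : 0 < L)
    (hg : ∀ y z : EuclideanSpace ℝ (Fin m), |g y - g z| ≤ L * ‖y - z‖)
    (c : EuclideanSpace ℝ (Fin n) → EuclideanSpace ℝ (Fin m))
    (hc : Differentiable ℝ c)
    (M : ℝ) (hM : 0 < M)
    (hJ : ∀ a b : EuclideanSpace ℝ (Fin n), ‖fderiv ℝ c a - fderiv ℝ c b‖ ≤ M * ‖a - b‖)
    (x s : EuclideanSpace ℝ (Fin n)) :
    |g (c (x + s)) - g (c x + (fderiv ℝ c x) s)| ≤ (1 / 2) * L * M * ‖s‖ ^ 2 :=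
  stmt_8_general (g := g) hL.le hg convex_univ (fun z _ ↦ (hc z).hasFDerivAt.hasFDerivWithinAt)
    (mem_univ x) (mem_univ (x + s)) (fun z _ ↦ hJ z x)
end

section
/- Let x, s, s₁ ∈ ℝⁿ, Δ > 0, α > 0, β ≥ 1, κ_m > 0, κ_mdc ∈ (0,1), and real numbers ξ > 0, m₀, m_s, F, F₊ (representing ξ(Δ;x,ν), m(0;x), m(s;x), f(x)+h(x), and f(x+s)+h(x+s)). Assume: (i) |F₊ − m_s| ≤ κ_m‖s‖²; (ii) m₀ − m_s ≥ κ_mdc ξ; (iii) ξ ≥ (2αΔ)⁻¹‖s₁‖²; (iv) ‖s‖ ≤ β‖s₁‖; (v) m₀ = F. Then the ratio ρ := (F − F₊)/(m₀ − m_s) satisfies |ρ − 1| ≤ (2 κ_m α β² / κ_mdc) Δ. In particular, for any η₂ ∈ (0,1), if Δ ≤ κ_mdc(1 − η₂)/(2 κ_m α β²) then ρ ≥ η₂. -/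
/-!
When the model agrees with the objective at the current iterate, `ρ - 1` is the model error divided
by the predicted reduction. The error is quadratic in the step, hence at most a multiple of
`‖s₁‖ ^ 2 ≤ 2 * α * Δ * ξ`, whereas the predicted reduction is at least `κmdc * ξ`: the unknown `ξ`
cancels and only a multiple of `Δ` remains.
-/

section ReductionRatio

variable {𝕜 : Type*} [Field 𝕜] [LinearOrder 𝕜] [IsStrictOrderedRing 𝕜]

theorem abs_reduction_ratio_sub_one_le {F Fplus ms C : 𝕜} (hpred : 0 < F - ms)
    (herror : |Fplus - ms| ≤ C * (F - ms)) : |(F - Fplus) / (F - ms) - 1| ≤ C := by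
  rwa [div_sub_one hpred.ne', sub_sub_sub_cancel_left, abs_div, abs_of_pos hpred, abs_sub_comm,
    div_le_iff₀ hpred]

theorem le_of_abs_sub_one_le_mul {ρ C Δ η : 𝕜} (hC : 0 < C) (hρ : |ρ - 1| ≤ C * Δ)
    (hΔ : Δ ≤ (1 - η) / C) : η ≤ ρ := by
  have hdeviation : C * Δ ≤ 1 - η := (le_div_iff₀' hC).mp hΔ
  linarith [neg_le_of_abs_le hρ]

end ReductionRatio

section ModelError

variable {E : Type*} [SeminormedAddGroup E] {s s₁ : E} {β c ξ : ℝ}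

theorem norm_sq_le_of_norm_le_mul (hc : 0 < c) (hξ : c⁻¹ * ‖s₁‖ ^ 2 ≤ ξ)
    (hstep : ‖s‖ ≤ β * ‖s₁‖) : ‖s‖ ^ 2 ≤ β ^ 2 * (c * ξ) :=
  calc
    ‖s‖ ^ 2 ≤ (β * ‖s₁‖) ^ 2 := by gcongr
    _ = β ^ 2 * ‖s₁‖ ^ 2 := mul_pow ..
    _ ≤ β ^ 2 * (c * ξ) := by
      gcongr
      exact (inv_mul_le_iff₀ hc).mp hξ

theorem model_error_le_mul_predicted_reduction {κm κmdc error pred : ℝ} (hc : 0 < c)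
    (hκm : 0 ≤ κm) (hκmdc : 0 < κmdc) (hmodel : error ≤ κm * ‖s‖ ^ 2) (hdec : κmdc * ξ ≤ pred)
    (hξ : c⁻¹ * ‖s₁‖ ^ 2 ≤ ξ) (hstep : ‖s‖ ≤ β * ‖s₁‖) :
    error ≤ κm * β ^ 2 * c / κmdc * pred :=
  calc
    error ≤ κm * ‖s‖ ^ 2 := hmodel
    _ ≤ κm * (β ^ 2 * (c * ξ)) := by
      gcongr
      exact norm_sq_le_of_norm_le_mul hc hξ hstep
    _ = κm * β ^ 2 * c / κmdc * (κmdc * ξ) := by field_simp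
    _ ≤ κm * β ^ 2 * c / κmdc * pred := by gcongr

end ModelError

theorem stmt_9_general {E : Type*} [SeminormedAddGroup E] {s s₁ : E}
    {Δ α β κm κmdc ξ ms F Fplus : ℝ} (hΔ : 0 < Δ) (hα : 0 < α) (hβ : 0 < β) (hκm : 0 < κm)
    (hκmdc : 0 < κmdc) (hξ : 0 < ξ) (hmodel : |Fplus - ms| ≤ κm * ‖s‖ ^ 2)
    (hdec : κmdc * ξ ≤ F - ms) (hξlb : (2 * α * Δ)⁻¹ * ‖s₁‖ ^ 2 ≤ ξ)
    (hstep : ‖s‖ ≤ β * ‖s₁‖) :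
    |(F - Fplus) / (F - ms) - 1| ≤ (2 * κm * α * β ^ 2 / κmdc) * Δ ∧
    ∀ η₂ : ℝ, Δ ≤ κmdc * (1 - η₂) / (2 * κm * α * β ^ 2) →
      η₂ ≤ (F - Fplus) / (F - ms) := by
  have hpred : 0 < F - ms := (mul_pos hκmdc hξ).trans_le hdec
  have hratio : |(F - Fplus) / (F - ms) - 1| ≤ (2 * κm * α * β ^ 2 / κmdc) * Δ := by
    have herror := model_error_le_mul_predicted_reduction (by positivity) hκm.le hκmdc
      hmodel hdec hξlb hstep
    exact (abs_reduction_ratio_sub_one_le hpred herror).trans_eq (by ring)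
  refine ⟨hratio, fun η₂ hthreshold ↦ le_of_abs_sub_one_le_mul (by positivity) hratio ?_⟩
  rwa [div_div_eq_mul_div, mul_comm (1 - η₂)]

/-- The key quantitative estimate behind the "very successful iteration"
threshold: under the model-adequacy, model-decrease, proximal-gradient-decrease and step
bound conditions, the ratio `ρ = (F − Fplus)/(m₀ − m_s)` satisfies
`|ρ − 1| ≤ (2 κ_m α β² / κ_mdc) Δ`; in particular `Δ ≤ κ_mdc(1 − η₂)/(2 κ_m α β²)` implies
`ρ ≥ η₂` for any `η₂ ∈ (0,1)`. -/
theorem stmt_9 (n : ℕ)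
    (x s s₁ : EuclideanSpace ℝ (Fin n))
    (Δ α β κm κmdc : ℝ)
    (hΔ : 0 < Δ) (hα : 0 < α) (hβ : 1 ≤ β)
    (hκm : 0 < κm) (hκmdc : 0 < κmdc) (hκmdc1 : κmdc < 1)
    (ξ m₀ ms F Fplus : ℝ) (hξ : 0 < ξ)
    (hmodel : |Fplus - ms| ≤ κm * ‖s‖ ^ 2)
    (hdec : m₀ - ms ≥ κmdc * ξ)
    (hξlb : ξ ≥ (2 * α * Δ)⁻¹ * ‖s₁‖ ^ 2)
    (hstep : ‖s‖ ≤ β * ‖s₁‖)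
    (hm₀ : m₀ = F) :
    |(F - Fplus) / (m₀ - ms) - 1| ≤ (2 * κm * α * β ^ 2 / κmdc) * Δ ∧
    ∀ η₂ : ℝ, 0 < η₂ → η₂ < 1 → Δ ≤ κmdc * (1 - η₂) / (2 * κm * α * β ^ 2) →
      η₂ ≤ (F - Fplus) / (m₀ - ms) := by
  subst hm₀
  have ⟨hratio, hsucc⟩ := stmt_9_general hΔ hα (by linarith) hκm hκmdc hξ hmodel hdec hξlb hstep
  exact ⟨hratio, fun η₂ _ _ ↦ hsucc η₂⟩
end

section
/- Let 0 < γ₁ < 1, Δ_succ > 0, and let (Δ_k)_{k∈ℕ} be a sequence of positive reals such that Δ_{k+1} ≥ γ₁ Δ_k for every k, and Δ_{k+1} ≥ Δ_k whenever Δ_k ≤ Δ_succ. Then Δ_k ≥ Δ_min := min(Δ₀, γ₁ Δ_succ) for every k ∈ ℕ. -/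
theorem monotone_inf_const_of_inf_le_succ {α : Type*} [SemilatticeInf α] {u : ℕ → α} {c : α}
    (h : ∀ k, u k ⊓ c ≤ u (k + 1)) : Monotone fun k ↦ u k ⊓ c :=
  monotone_nat_of_le_succ fun k ↦ le_inf (h k) inf_le_right

theorem stmt_11_general {α : Type*} [LinearOrder α] {φ : α → α} (hφ : Monotone φ) {s : α}
    {u : ℕ → α} (hstep : ∀ k, φ (u k) ≤ u (k + 1))
    (hsucc : ∀ k, u k ≤ s → u k ≤ u (k + 1)) (k : ℕ) :
    min (u 0) (φ s) ≤ u k := by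
  have min_le_succ (j : ℕ) : min (u j) (φ s) ≤ u (j + 1) := by
    rcases le_total (u j) s with hle | hge
    · exact min_le_of_left_le (hsucc j hle)
    · exact min_le_of_right_le ((hφ hge).trans (hstep j))
  calc
    min (u 0) (φ s) ≤ min (u k) (φ s) := monotone_inf_const_of_inf_le_succ min_le_succ k.zero_le
    _ ≤ u k := min_le_left _ _

/-- Uniform lower bound on the trust-region radii: if each iteration shrinks
the radius at most by the factor `γ₁ ∈ (0,1)`, and the radius never decreases once it is
below `Δ_succ`, then `Δ_k ≥ Δ_min := min(Δ₀, γ₁ Δ_succ)` for all `k`. -/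
theorem stmt_11 (γ₁ Δsucc : ℝ) (hγ₁ : 0 < γ₁) (hγ₁1 : γ₁ < 1) (hΔsucc : 0 < Δsucc)
    (Δ : ℕ → ℝ) (hΔpos : ∀ k, 0 < Δ k)
    (hfactor : ∀ k, γ₁ * Δ k ≤ Δ (k + 1))
    (hsucc : ∀ k, Δ k ≤ Δsucc → Δ k ≤ Δ (k + 1)) :
    ∀ k, min (Δ 0) (γ₁ * Δsucc) ≤ Δ k :=
  stmt_11_general (monotone_mul_left_of_nonneg hγ₁.le) hfactor hsucc
end

section
/- Let 0 < γ₂ < 1 < γ₄, Δ₀ > 0, and 0 < Δ_min ≤ Δ₀. Let U and S be natural numbers (the counts of unsuccessful and successful iterations before the stopping test is first met) such that Δ_min ≤ Δ₀ · γ₂^U · γ₄^S. Then U ≤ log(Δ_min/Δ₀)/log(γ₂) + S · |log(γ₄)/log(γ₂)|. -/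
theorem le_rpow_mul_rpow_iff_le_logb_sub_of_base_lt_one {b c x u s : ℝ}
    (hb0 : 0 < b) (hb1 : b < 1) (hc : 0 < c) (hx : 0 < x) :
    x ≤ b ^ u * c ^ s ↔ u ≤ Real.logb b x - s * Real.logb b c := by
  have hcs : 0 < c ^ s := Real.rpow_pos_of_pos hc s
  rw [← div_le_iff₀ hcs, ← Real.le_logb_iff_rpow_le_of_base_lt_one hb0 hb1 (div_pos hx hcs),
    Real.logb_div hx.ne' hcs.ne', Real.logb_rpow_eq_mul_logb_of_pos hc]

theorem stmt_14_general {γ₂ γ₄ Δ₀ Δmin u s : ℝ}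
    (hγ₂0 : 0 < γ₂) (hγ₂ : γ₂ < 1) (hγ₄ : 0 < γ₄) (hΔmin : 0 < Δmin) (hs : 0 ≤ s)
    (h : Δmin ≤ Δ₀ * γ₂ ^ u * γ₄ ^ s) :
    u ≤ Real.logb γ₂ (Δmin / Δ₀) + s * |Real.logb γ₂ γ₄| := by
  rw [mul_assoc] at h
  have hΔ₀ : 0 < Δ₀ := pos_of_mul_pos_left (hΔmin.trans_le h) (by positivity)
  have hratio : Δmin / Δ₀ ≤ γ₂ ^ u * γ₄ ^ s := (div_le_iff₀' hΔ₀).2 h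
  calc
    u ≤ Real.logb γ₂ (Δmin / Δ₀) - s * Real.logb γ₂ γ₄ :=
      (le_rpow_mul_rpow_iff_le_logb_sub_of_base_lt_one hγ₂0 hγ₂ hγ₄ (div_pos hΔmin hΔ₀)).1 hratio
    _ = Real.logb γ₂ (Δmin / Δ₀) + s * -Real.logb γ₂ γ₄ := by ring
    _ ≤ Real.logb γ₂ (Δmin / Δ₀) + s * |Real.logb γ₂ γ₄| := by
      gcongr
      exact neg_le_abs _

/-- Lemma on unsuccessful iterations, arithmetic core: if
`Δ_min ≤ Δ₀ γ₂^U γ₄^S` with `0 < γ₂ < 1 < γ₄`, `Δ₀ > 0` and `0 < Δ_min ≤ Δ₀`, then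
`U ≤ log(Δ_min/Δ₀)/log γ₂ + S |log γ₄ / log γ₂|`. -/
theorem stmt_14 (γ₂ γ₄ Δ₀ Δmin : ℝ)
    (hγ₂0 : 0 < γ₂) (hγ₂ : γ₂ < 1) (hγ₄ : 1 < γ₄)
    (hΔ₀ : 0 < Δ₀) (hΔmin0 : 0 < Δmin) (hΔmin : Δmin ≤ Δ₀)
    (U S : ℕ)
    (hUS : Δmin ≤ Δ₀ * γ₂ ^ U * γ₄ ^ S) :
    (U : ℝ) ≤ Real.log (Δmin / Δ₀) / Real.log γ₂ +
      (S : ℝ) * |Real.log γ₄ / Real.log γ₂| := by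
  rw [Real.log_div_log, Real.log_div_log]
  exact stmt_14_general hγ₂0 hγ₂ (one_pos.trans hγ₄) hΔmin0 S.cast_nonneg (by exact_mod_cast hUS)
end

section
/- Consider the nonsmooth regularized trust-region algorithm with infinitely many successful iterations and ν_k ≥ ν_min > 0 for all k. Then either f(x_k) + h(x_k) → −∞ as k → ∞, or liminf_{k→∞} ν_k⁻¹ ξ(Δ_min; x_k, ν_k)^{1/2} = 0. -/
open Filter

open scoped Topology

/-!
A nonincreasing sequence `F` either tends to `-∞` or converges. If it converges, its decrements
tend to zero, and on successful iterations these dominate a fixed positive multiple of `ξmin`.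
Since there are infinitely many successful iterations and `ν` is bounded away from zero, the
nonnegative sequence `ν⁻¹ √ξmin` tends to zero along a nontrivial subfilter of `atTop`, so its
lower limit is zero.
-/

theorem liminf_eq_of_mapClusterPt_of_eventually_ge {ι R : Type*}
    [ConditionallyCompleteLinearOrder R] [TopologicalSpace R] [OrderTopology R]
    {l : Filter ι} {u : ι → R} {a : R} (hu : MapClusterPt a l u) (ha : ∀ᶠ i in l, a ≤ u i) :
    liminf u l = a := by
  have : (𝓝 a ⊓ map u l).NeBot := hu
  have hcobdd : IsCoboundedUnder (· ≥ ·) l u :=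
    ((isBounded_le_nhds a).mono inf_le_left).isCobounded_ge.mono inf_le_right
  exact le_antisymm (hu.liminf_le (isBoundedUnder_of_eventually_ge ha))
    (le_liminf_of_le hcobdd ha)

theorem tendsto_sub_succ_of_tendsto {G : Type*} [AddGroup G] [TopologicalSpace G]
    [ContinuousSub G] {u : ℕ → G} {a : G} (hu : Tendsto u atTop (𝓝 a)) :
    Tendsto (fun k => u k - u (k + 1)) atTop (𝓝 0) := by
  simpa only [sub_self] using hu.sub ((tendsto_add_atTop_iff_nat 1).mpr hu)

section OrderedField

variable {ι 𝕜 : Type*} [Field 𝕜] [LinearOrder 𝕜] [IsStrictOrderedRing 𝕜] [TopologicalSpace 𝕜]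
  [OrderTopology 𝕜] {l : Filter ι}

theorem tendsto_zero_of_mul_le {c : 𝕜} {u d : ι → 𝕜} (hc : 0 < c) (hu : ∀ᶠ i in l, 0 ≤ u i)
    (hud : ∀ᶠ i in l, c * u i ≤ d i) (hd : Tendsto d l (𝓝 0)) : Tendsto u l (𝓝 0) := by
  have hbound : Tendsto (fun i => c⁻¹ * d i) l (𝓝 0) := by
    simpa only [mul_zero] using hd.const_mul c⁻¹
  exact tendsto_of_tendsto_of_tendsto_of_le_of_le' tendsto_const_nhds hbound hu
    (hud.mono fun _ h => (le_inv_mul_iff₀ hc).mpr h)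

theorem tendsto_inv_mul_zero_of_eventually_ge {c : 𝕜} {ν u : ι → 𝕜} (hc : 0 < c)
    (hν : ∀ᶠ i in l, c ≤ ν i) (hu : Tendsto u l (𝓝 0)) :
    Tendsto (fun i => (ν i)⁻¹ * u i) l (𝓝 0) := by
  refine bdd_le_mul_tendsto_zero (b := 0) (B := c⁻¹) ?_ ?_ hu
  · exact hν.mono fun _ h => inv_nonneg.mpr (hc.le.trans h)
  · exact hν.mono fun _ h => inv_anti₀ hc h

end OrderedField

/-- liminf convergence: for the nonsmooth regularized trust-region
algorithm with infinitely many successful iterations and `ν_k ≥ ν_min > 0`, either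
`f(x_k) + h(x_k) → −∞` or `liminf ν_k⁻¹ ξ(Δ_min; x_k, ν_k)^{1/2} = 0`.
Here `F k = f(x_k) + h(x_k)` (nonincreasing) and `ξmin k = ξ(Δ_min; x_k, ν_k) ≥ 0`, and on
every successful iteration `F k − F (k+1) ≥ η₁ κ_mdc ξ(Δ_k;x_k,ν_k) ≥ η₁ κ_mdc ξmin k`. -/
theorem stmt_16
    (η₁ η₂ γ₁ γ₂ γ₃ γ₄ α β κmdc : ℝ)
    (hη₁ : 0 < η₁) (hη₁₂ : η₁ ≤ η₂) (hη₂ : η₂ < 1)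
    (hγ₁ : 0 < γ₁) (hγ₁₂ : γ₁ ≤ γ₂) (hγ₂ : γ₂ < 1) (hγ₃ : 1 < γ₃) (hγ₃₄ : γ₃ ≤ γ₄)
    (hα : 0 < α) (hβ : 1 ≤ β) (hκmdc : 0 < κmdc) (hκmdc1 : κmdc < 1)
    (νmin : ℝ) (hνmin : 0 < νmin)
    (F ρ ν ξmin : ℕ → ℝ)
    (hν : ∀ k, νmin ≤ ν k)
    (hξnn : ∀ k, 0 ≤ ξmin k)
    (hmono : ∀ k, F (k + 1) ≤ F k)
    (hsuccdec : ∀ k, η₁ ≤ ρ k → η₁ * κmdc * ξmin k ≤ F k - F (k + 1))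
    (hinf : {k : ℕ | η₁ ≤ ρ k}.Infinite) :
    Tendsto F atTop atBot ∨
      liminf (fun k => (ν k)⁻¹ * Real.sqrt (ξmin k)) atTop = 0 := by
  rcases tendsto_atTop_of_antitone (antitone_nat_of_succ_le hmono) with hbot | ⟨L, hL⟩
  · exact Or.inl hbot
  right
  let successful : Filter ℕ := atTop ⊓ 𝓟 {k | η₁ ≤ ρ k}
  have hle : successful ≤ atTop := inf_le_left
  have : successful.NeBot :=
    frequently_mem_iff_neBot.mp (Nat.frequently_atTop_iff_infinite.mpr hinf)
  have hdec : ∀ᶠ k in successful, η₁ * κmdc * ξmin k ≤ F k - F (k + 1) :=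
    eventually_inf_principal.mpr (.of_forall hsuccdec)
  have hξ : Tendsto ξmin successful (𝓝 0) :=
    tendsto_zero_of_mul_le (mul_pos hη₁ hκmdc) (.of_forall hξnn) hdec
      ((tendsto_sub_succ_of_tendsto hL).mono_left hle)
  have hsqrt : Tendsto (fun k => √(ξmin k)) successful (𝓝 0) := by
    simpa only [Real.sqrt_zero] using hξ.sqrt
  have hnonneg (k : ℕ) : 0 ≤ (ν k)⁻¹ * √(ξmin k) :=
    mul_nonneg (inv_nonneg.mpr (hνmin.le.trans (hν k))) (Real.sqrt_nonneg _)
  have hlim : Tendsto (fun k => (ν k)⁻¹ * √(ξmin k)) successful (𝓝 0) :=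
    tendsto_inv_mul_zero_of_eventually_ge hνmin (.of_forall hν) hsqrt
  exact liminf_eq_of_mapClusterPt_of_eventually_ge (hlim.mapClusterPt.mono hle)
    (.of_forall hnonneg)
end
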